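/- Let α ∈ (0,1), β = α+1, and fix a finitizator φ. There exist numbers p ∈ (0,1), B < 0, θ₀ > 0 and ε₀ > 0 such that for all θ ∈ [0, θ₀] and all ε ∈ (0, ε₀) the integral J(ε,θ) = ∫_ℝ (|1 − e^{iθ}·F^{[ε]}(t)|^p − 1) dt converges absolutely and J(ε,θ) < B. -/

import Mathlib

/-!
Write `β = α + 1 ∈ (1, 2)`. By scaling, `F^{[ε]}(t) = ε^{-β} G(t/ε)` for one continuous real
profile `G = W_α φ`, and off the support of `φ` differentiation under the integral gives
`G(t) = ∫ φ(x) |x - t|^{-β} dx`, which lies between `(|t| + 1/2)^{-β}` and `(|t| - 1/2)^{-β}`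
(`exists_profile`). Consequently `|F^{[ε]}(t)| ≤ C |t|^{-β}` uniformly in `ε`, and
`F^{[ε]}(t) → |t|^{-β}` as `ε → 0` for `t ≠ 0`. For `0 < p < 1` one has
`||1 - z|^p - 1| ≤ min(|z|, |z|^p)`, so when `β p < 1` the integrands have a common integrable
majorant. This gives absolute convergence, and dominated convergence gives
`J(ε, θ) → J₀(p) = ∫ (|1 - |t|^{-β}|^p - 1) dt` as `(ε, θ) → 0`. It remains to find `p` with
`J₀(p) < 0`; then `B = J₀(p) / 2` works.

As `p → 0`, `J₀(p) / (2p)` tends to `∫₀^∞ log |1 - t^{-β}| dt = β (1 - ∑_{n ≥ 1} 2/(β² n² - 1))`,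
obtained by expanding the logarithm on `(0, 1)` and `(1, ∞)`. At `β = 2` the series telescopes to
`1`, and every term strictly decreases in `β`, so the value is negative for `β < 2`. The proof
needs only the upper bound, hence only finitely many terms (`exists_sum_gt_one`), and works at
positive `p`: `(1 - u)^p = exp (p log (1 - u))` is at most `1 - p S + p² N² u / 2`, where `S` is
the `N`-term partial sum of `-log (1 - u)` (`one_sub_rpow_le`). Integrating this termwise bounds
`J₀(p)` by an explicit function of `p` which is negative for small `p` (`exists_exponent`).
-/

open MeasureTheory

/-- (V_α g)(t) = (1/α)·∫ g(x)·sgn(x−t)·|x−t|^{−α} dx. -/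
noncomputable def Valpha (α : ℝ) (g : ℝ → ℂ) (t : ℝ) : ℂ :=
  (α⁻¹ : ℝ) • ∫ x : ℝ, g x * ((Real.sign (x - t) * |x - t| ^ (-α) : ℝ) : ℂ)

/-- (W_α g) = (V_α g)′. -/
noncomputable def Walpha (α : ℝ) (g : ℝ → ℂ) : ℝ → ℂ :=
  deriv (Valpha α g)

/-- F^{[ε]} = W_α(φ_ε), where φ_ε(x) = ε⁻¹·φ(x/ε). -/
noncomputable def Feps (α : ℝ) (φ : ℝ → ℝ) (ε : ℝ) : ℝ → ℂ :=
  Walpha α (fun x => ((ε⁻¹ * φ (x / ε) : ℝ) : ℂ))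

open Set Filter Topology

/-! ### The profile of `F^{[ε]}` -/

/-- The kernel `sgn(y) |y|^{-α}` of `V_α`. -/
noncomputable def oddKer (α y : ℝ) : ℝ := Real.sign y * |y| ^ (-α)

/-- `α V_α φ` for a real-valued `φ`, as a real-valued function. -/
noncomputable def realV (α : ℝ) (φ : ℝ → ℝ) (t : ℝ) : ℝ := ∫ x : ℝ, φ x * oddKer α (x - t)

lemma hasDerivAt_oddKer (α : ℝ) {y : ℝ} (hy : y ≠ 0) :
    HasDerivAt (oddKer α) (-α * |y| ^ (-(α + 1))) y := by
  have e : -(α + 1) = -α - 1 := by ring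
  rcases lt_or_gt_of_ne hy with h | h
  · have h1 : HasDerivAt (fun y : ℝ => -((-y) ^ (-α))) (-α * |y| ^ (-(α + 1))) y := by
      have := ((hasDerivAt_neg y).rpow_const (p := -α) (Or.inl (by linarith))).neg
      exact this.congr_deriv (by rw [abs_of_neg h, e]; ring)
    refine h1.congr_of_eventuallyEq ?_
    filter_upwards [Iio_mem_nhds h] with z hz
    rw [oddKer, Real.sign_of_neg hz, abs_of_neg hz]; ring
  · have h1 : HasDerivAt (fun y : ℝ => y ^ (-α)) (-α * |y| ^ (-(α + 1))) y := by
      have := (hasDerivAt_id y).rpow_const (p := -α) (Or.inl hy)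
      exact this.congr_deriv (by rw [abs_of_pos h, e]; simp)
    refine h1.congr_of_eventuallyEq ?_
    filter_upwards [Ioi_mem_nhds h] with z hz
    rw [oddKer, Real.sign_of_pos hz, abs_of_pos hz]; ring

lemma measurable_oddKer (α : ℝ) : Measurable (oddKer α) := by
  have h : Measurable Real.sign := by
    unfold Real.sign
    exact Measurable.ite measurableSet_Iio measurable_const
      (Measurable.ite measurableSet_Ioi measurable_const measurable_const)
  exact h.mul (by fun_prop)

lemma oddKer_neg (α y : ℝ) : oddKer α (-y) = -oddKer α y := by
  simp [oddKer, Real.sign_neg]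

lemma locallyIntegrable_oddKer {α : ℝ} (hα : α < 1) : LocallyIntegrable (oddKer α) := by
  refine locallyIntegrable_of_norm_le_rpow (C := 1) (α := α) (by simp) (by simpa using hα) ?_
    (measurable_oddKer α).aestronglyMeasurable
  refine ae_of_all _ fun y => ?_
  rw [oddKer, norm_mul, Real.norm_eq_abs, Real.norm_eq_abs,
    abs_of_nonneg (a := |y| ^ (-α)) (by positivity), Real.norm_eq_abs]
  gcongr
  rcases Real.sign_apply_eq y with h | h | h <;> simp [h]

lemma realV_eq_conv (α : ℝ) (φ : ℝ → ℝ) :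
    realV α φ = convolution φ (fun y => -oddKer α y) (ContinuousLinearMap.mul ℝ ℝ) volume := by
  ext t
  simp only [realV, convolution, ContinuousLinearMap.mul_apply', ← oddKer_neg, neg_sub]

/-- `realV α φ` is a convolution of a test function with a locally integrable kernel. -/
lemma contDiff_realV {α : ℝ} (hα : α < 1) {φ : ℝ → ℝ} (hφs : ContDiff ℝ (⊤ : ℕ∞) φ)
    (hφc : HasCompactSupport φ) : ContDiff ℝ 1 (realV α φ) := by
  rw [realV_eq_conv]
  exact_mod_cast hφc.contDiff_convolution_left (n := 1) (ContinuousLinearMap.mul ℝ ℝ)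
    (hφs.of_le (by exact_mod_cast le_top)) (locallyIntegrable_oddKer hα).neg

lemma integrable_mul_oddKer {α : ℝ} (hα : α < 1) {φ : ℝ → ℝ} (hφs : Continuous φ)
    (hφc : HasCompactSupport φ) (t : ℝ) : Integrable fun x => φ x * oddKer α (x - t) := by
  have := hφc.convolutionExists_left (ContinuousLinearMap.mul ℝ ℝ) hφs
    (locallyIntegrable_oddKer hα).neg t
  refine this.congr (ae_of_all _ fun x => ?_)
  simp only [ContinuousLinearMap.mul_apply', ← oddKer_neg, neg_sub, Pi.neg_apply]

/-- Away from the support of `φ` the kernel is smooth, and one may differentiate under the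
integral sign. -/
lemma hasDerivAt_realV {α : ℝ} (hα : α ∈ Ioo (0 : ℝ) 1) {φ : ℝ → ℝ} (hφs : Continuous φ)
    (hφc : HasCompactSupport φ) (hφ : ∀ x, φ x ≠ 0 → |x| < 1 / 2) {t : ℝ} (ht : 1 / 2 < |t|) :
    Integrable (fun x => φ x * |x - t| ^ (-(α + 1))) ∧
    HasDerivAt (realV α φ) (α * ∫ x, φ x * |x - t| ^ (-(α + 1))) t := by
  set δ := (|t| - 1 / 2) / 2 with hδ
  have hδ0 : 0 < δ := by rw [hδ]; linarith
  have hφi : Integrable φ := hφs.integrable_of_hasCompactSupport hφc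
  have key : ∀ s ∈ Metric.ball t δ, ∀ x, φ x ≠ 0 → δ ≤ |x - s| := by
    intro s hs x hx
    have h1 := hφ x hx
    rw [Metric.mem_ball, Real.dist_eq] at hs
    have h2 := abs_sub_abs_le_abs_sub t s
    have h3 := abs_sub_abs_le_abs_sub s x
    rw [abs_sub_comm t s] at h2
    rw [abs_sub_comm x s]
    linarith
  have := hasDerivAt_integral_of_dominated_loc_of_deriv_le (μ := volume) (𝕜 := ℝ)
    (F := fun t x => φ x * oddKer α (x - t))
    (F' := fun t x => α * (φ x * |x - t| ^ (-(α + 1)))) (x₀ := t)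
    (bound := fun x => α * (|φ x| * δ ^ (-(α + 1)))) (Metric.ball_mem_nhds t hδ0)
    (Eventually.of_forall fun s => (integrable_mul_oddKer hα.2 hφs hφc s).aestronglyMeasurable)
    (integrable_mul_oddKer hα.2 hφs hφc t)
    (by
      apply Measurable.aestronglyMeasurable
      have := hφs.measurable
      fun_prop)
    (ae_of_all _ fun x s hs => ?_)
    ((hφi.abs.mul_const _).const_mul _)
    (ae_of_all _ fun x s hs => ?_)
  · refine ⟨?_, ?_⟩
    · refine (this.1.const_mul α⁻¹).congr (ae_of_all _ fun x => ?_)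
      simp only []
      rw [inv_mul_cancel_left₀ hα.1.ne']
    · rw [← integral_const_mul]; exact this.2
  · by_cases h : φ x = 0
    · simp [h]
    · have h1 := key s hs x h
      rw [Real.norm_eq_abs, abs_mul, abs_mul, abs_of_pos hα.1,
        abs_of_nonneg (a := |x - s| ^ (-(α + 1))) (by positivity)]
      refine mul_le_mul_of_nonneg_left (mul_le_mul_of_nonneg_left ?_ (abs_nonneg _)) hα.1.le
      exact Real.rpow_le_rpow_of_nonpos hδ0 h1 (by linarith [hα.1])
  · by_cases h : φ x = 0
    · simpa [h] using hasDerivAt_const s (0 : ℝ)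
    · have h1 := key s hs x h
      have h2 : x - s ≠ 0 := abs_pos.1 (by linarith)
      have := ((hasDerivAt_oddKer α h2).comp s ((hasDerivAt_id s).const_sub x)).const_mul (φ x)
      exact this.congr_deriv (by ring)

/-- All the functions `F^{[ε]}` are rescalings of a single continuous real profile, which is
squeezed between two translates of `|t|^{-β}` away from the support of `φ`. -/
lemma exists_profile {α : ℝ} (hα : α ∈ Ioo (0 : ℝ) 1)
    {φ : ℝ → ℝ} (hφs : ContDiff ℝ (⊤ : ℕ∞) φ) (hφc : HasCompactSupport φ)
    (hφ0 : ∀ x, 0 ≤ φ x) (hφsupp : tsupport φ ⊆ Ioo (-(1 / 2) : ℝ) (1 / 2))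
    (hφ1 : ∫ x : ℝ, φ x = 1) :
    ∃ G : ℝ → ℝ, Continuous G ∧
      (∀ ε > 0, ∀ t, Feps α φ ε t = ((ε ^ (-(α + 1)) * G (t / ε) : ℝ) : ℂ)) ∧
      ∀ t, 1 / 2 < |t| →
        (|t| + 1 / 2) ^ (-(α + 1)) ≤ G t ∧ G t ≤ (|t| - 1 / 2) ^ (-(α + 1)) := by
  have hC := contDiff_realV hα.2 hφs hφc
  have hφ : ∀ x, φ x ≠ 0 → |x| < 1 / 2 := fun x hx =>
    abs_lt.2 (hφsupp (subset_tsupport _ hx))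
  refine ⟨fun t => α⁻¹ * deriv (realV α φ) t, ?_, ?_, ?_⟩
  · exact (hC.continuous_deriv le_rfl).const_mul _
  · intro ε hε t
    have hscale : Valpha α (fun x => ((ε⁻¹ * φ (x / ε) : ℝ) : ℂ)) =
        fun t => ((α⁻¹ * ε ^ (-α) * realV α φ (ε⁻¹ * t) : ℝ) : ℂ) := by
      ext s
      have h1 : ∫ x, φ x * oddKer α (x - ε⁻¹ * s) =
          ε⁻¹ * ∫ x, φ (x / ε) * oddKer α (x / ε - ε⁻¹ * s) := by
        rw [Measure.integral_comp_div (fun x => φ x * oddKer α (x - ε⁻¹ * s)) ε, abs_of_pos hε,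
          smul_eq_mul, inv_mul_cancel_left₀ hε.ne']
      rw [Valpha, realV, h1]
      simp only [← Complex.ofReal_mul]
      rw [integral_complex_ofReal, Complex.real_smul, ← Complex.ofReal_mul, mul_assoc α⁻¹]
      congr 2
      rw [← integral_const_mul, ← integral_const_mul]
      refine integral_congr_ae (ae_of_all _ fun x => ?_)
      have h2 : x / ε - ε⁻¹ * s = ε⁻¹ * (x - s) := by field_simp
      have h3 : Real.sign (ε⁻¹ * (x - s)) = Real.sign (x - s) := by
        rcases lt_trichotomy (x - s) 0 with h | h | h
        · rw [Real.sign_of_neg h, Real.sign_of_neg (mul_neg_of_pos_of_neg (by positivity) h)]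
        · rw [h]; simp
        · rw [Real.sign_of_pos h, Real.sign_of_pos (by positivity)]
      simp only [oddKer]
      rw [h2, h3, abs_mul, abs_of_pos (inv_pos.2 hε), Real.mul_rpow (by positivity) (by positivity),
        Real.inv_rpow hε.le]
      have : ε ^ (-α) ≠ 0 := by positivity
      field_simp
    rw [Feps, Walpha, hscale]
    have hd : HasDerivAt (realV α φ) (deriv (realV α φ) (t / ε)) (ε⁻¹ * t) := by
      rw [div_eq_inv_mul]
      exact (hC.differentiable (by simp) _).hasDerivAt
    have h4 := ((hd.comp t ((hasDerivAt_id t).const_mul ε⁻¹)).const_mul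
      (α⁻¹ * ε ^ (-α))).ofReal_comp.deriv
    refine h4.trans ?_
    congr 1
    rw [show -(α + 1) = -α - 1 by ring, Real.rpow_sub_one hε.ne']
    ring
  · intro t ht
    obtain ⟨hi, hd⟩ := hasDerivAt_realV hα hφs.continuous hφc hφ ht
    have hφi : Integrable φ := hφs.continuous.integrable_of_hasCompactSupport hφc
    simp only [hd.deriv]
    rw [inv_mul_cancel_left₀ hα.1.ne']
    have hc : ∀ c : ℝ, ∫ x, φ x * c = c := fun c => by rw [integral_mul_const, hφ1, one_mul]
    have hneg : -(α + 1) ≤ 0 := by linarith [hα.1]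
    constructor
    · rw [← hc ((|t| + 1 / 2) ^ (-(α + 1)))]
      refine integral_mono (hφi.mul_const _) hi fun x => ?_
      by_cases h : φ x = 0
      · simp [h]
      refine mul_le_mul_of_nonneg_left ?_ (hφ0 x)
      have := hφ x h
      have h1 := abs_sub_abs_le_abs_sub t x
      have h2 := abs_sub x t
      rw [abs_sub_comm] at h1
      exact Real.rpow_le_rpow_of_nonpos (by linarith) (by linarith) hneg
    · rw [← hc ((|t| - 1 / 2) ^ (-(α + 1)))]
      refine integral_mono hi (hφi.mul_const _) fun x => ?_
      by_cases h : φ x = 0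
      · simp [h]
      refine mul_le_mul_of_nonneg_left ?_ (hφ0 x)
      have := hφ x h
      have h1 := abs_sub_abs_le_abs_sub t x
      rw [abs_sub_comm] at h1
      exact Real.rpow_le_rpow_of_nonpos (by linarith) (by linarith) hneg

/-! ### Uniform bound and pointwise limit -/

/-- The bound `|F^{[ε]}(t)| ≤ C |t|^{-β}`, uniform in `ε`. -/
lemma profile_bound {β : ℝ} (hβ : 0 < β) {G : ℝ → ℝ} (hG : Continuous G)
    (hb : ∀ t, 1 / 2 < |t| → (|t| + 1 / 2) ^ (-β) ≤ G t ∧ G t ≤ (|t| - 1 / 2) ^ (-β)) :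
    ∃ C > 0, ∀ ε > 0, ∀ t ≠ 0, |ε ^ (-β) * G (t / ε)| ≤ C * |t| ^ (-β) := by
  obtain ⟨M, hM⟩ := (isCompact_Icc (a := (-1 : ℝ)) (b := 1)).exists_bound_of_continuousOn
    hG.continuousOn
  set C := max M (2 ^ β) with hC
  have hC0 : 0 < C := lt_of_lt_of_le (by positivity) (le_max_right _ _)
  have h1 : ∀ s ≠ 0, |G s| ≤ C * |s| ^ (-β) := by
    intro s hs
    have hs0 := abs_pos.2 hs
    rcases le_or_gt |s| 1 with h | h
    · have h2 := hM s (abs_le.1 h)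
      have h3 : 1 ≤ |s| ^ (-β) := Real.one_le_rpow_of_pos_of_le_one_of_nonpos hs0 h (by linarith)
      rw [Real.norm_eq_abs] at h2
      nlinarith [le_max_left M (2 ^ β)]
    · obtain ⟨h2, h3⟩ := hb s (by linarith)
      have h4 : 0 ≤ G s := le_trans (by positivity) h2
      rw [abs_of_nonneg h4]
      calc G s ≤ (|s| - 1 / 2) ^ (-β) := h3
        _ ≤ (|s| / 2) ^ (-β) :=
          Real.rpow_le_rpow_of_nonpos (by linarith) (by linarith) (by linarith)
        _ = 2 ^ β * |s| ^ (-β) := by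
          rw [Real.div_rpow hs0.le (by norm_num), Real.rpow_neg (by norm_num : (0:ℝ) ≤ 2)]
          field_simp
        _ ≤ C * |s| ^ (-β) := by gcongr; exact le_max_right _ _
  refine ⟨C, hC0, fun ε hε t ht => ?_⟩
  have h2 := h1 (t / ε) (div_ne_zero ht hε.ne')
  rw [abs_div, abs_of_pos hε, Real.div_rpow (abs_nonneg _) hε.le] at h2
  have h3 : 0 < ε ^ (-β) := by positivity
  rw [abs_mul, abs_of_pos h3]
  calc ε ^ (-β) * |G (t / ε)| ≤ ε ^ (-β) * (C * (|t| ^ (-β) / ε ^ (-β))) := by gcongr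
    _ = C * |t| ^ (-β) := by field_simp

lemma tendsto_profile {β : ℝ} {G : ℝ → ℝ}
    (hb : ∀ t, 1 / 2 < |t| → (|t| + 1 / 2) ^ (-β) ≤ G t ∧ G t ≤ (|t| - 1 / 2) ^ (-β))
    {t : ℝ} (ht : t ≠ 0) :
    Tendsto (fun ε => ε ^ (-β) * G (t / ε)) (𝓝[>] 0) (𝓝 (|t| ^ (-β))) := by
  have ht0 := abs_pos.2 ht
  have hlim : ∀ c : ℝ, Tendsto (fun ε : ℝ => (|t| + ε * c) ^ (-β)) (𝓝[>] 0) (𝓝 (|t| ^ (-β))) := by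
    intro c
    have : ContinuousAt (fun ε : ℝ => (|t| + ε * c) ^ (-β)) 0 :=
      ContinuousAt.rpow_const (by fun_prop) (Or.inl (by simpa using ht))
    have h := this.tendsto
    simp only [zero_mul, add_zero] at h
    exact h.mono_left nhdsWithin_le_nhds
  have hev : ∀ᶠ ε : ℝ in 𝓝[>] 0, ε ∈ Ioo 0 (2 * |t|) := Ioo_mem_nhdsGT (by linarith)
  have hsc : ∀ ε > 0, ∀ c, 0 ≤ |t| + ε * c →
      ε ^ (-β) * (|t / ε| + c) ^ (-β) = (|t| + ε * c) ^ (-β) := by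
    intro ε hε c hc
    have : |t / ε| + c = (|t| + ε * c) / ε := by rw [abs_div, abs_of_pos hε]; field_simp
    rw [this, Real.div_rpow hc hε.le]
    have h3 : 0 < ε ^ (-β) := by positivity
    field_simp
  have hlarge : ∀ ε ∈ Ioo 0 (2 * |t|), 1 / 2 < |t / ε| := by
    intro ε hε
    rw [abs_div, abs_of_pos hε.1, lt_div_iff₀ hε.1]; linarith [hε.2]
  refine tendsto_of_tendsto_of_tendsto_of_le_of_le' (hlim (1 / 2)) (hlim (-(1 / 2))) ?_ ?_
  · filter_upwards [hev] with ε hε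
    rw [← hsc ε hε.1 _ (by linarith [hε.1])]
    have := (hb _ (hlarge ε hε)).1
    have h3 : 0 ≤ ε ^ (-β) := Real.rpow_nonneg hε.1.le _
    gcongr
  · filter_upwards [hev] with ε hε
    rw [← hsc ε hε.1 _ (by linarith [hε.2])]
    have := (hb _ (hlarge ε hε)).2
    have h3 : 0 ≤ ε ^ (-β) := Real.rpow_nonneg hε.1.le _
    rw [sub_eq_add_neg] at this
    gcongr

/-! ### The integrable majorant -/

lemma abs_rpow_sub_one_le {x p : ℝ} (hx : 0 ≤ x) (hp : 0 < p) (hp1 : p ≤ 1) :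
    |x ^ p - 1| ≤ |x - 1| ∧ |x ^ p - 1| ≤ |x - 1| ^ p := by
  rcases le_or_gt x 1 with h | h
  · have h1 : x ^ p ≤ 1 := Real.rpow_le_one hx h hp.le
    rw [abs_of_nonpos (by linarith), abs_of_nonpos (by linarith : x - 1 ≤ 0)]
    constructor
    · have := Real.rpow_le_rpow_of_exponent_ge' hx h hp.le hp1
      rw [Real.rpow_one] at this
      linarith
    · have := Real.rpow_add_le_add_rpow hx (by linarith : 0 ≤ 1 - x) hp.le hp1
      rw [add_sub_cancel, Real.one_rpow] at this
      rw [neg_sub, neg_sub]; linarith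
  · have h1 : 1 ≤ x ^ p := Real.one_le_rpow h.le hp.le
    rw [abs_of_nonneg (by linarith), abs_of_nonneg (by linarith : 0 ≤ x - 1)]
    constructor
    · have := Real.rpow_le_rpow_of_exponent_le h.le hp1
      rw [Real.rpow_one] at this
      linarith
    · have := Real.rpow_add_le_add_rpow zero_le_one (by linarith : 0 ≤ x - 1) hp.le hp1
      rw [add_sub_cancel, Real.one_rpow] at this
      linarith

/-- The majorant of `||1 - z|^p - 1|` when `|z| ≤ C y^{-β}`: the bound `|z|^p` is integrable near
`0`, the bound `|z|` near infinity. -/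
noncomputable def majorant (β p C : ℝ) (y : ℝ) : ℝ :=
  if y ≤ 1 then C ^ p * y ^ (-(β * p)) else C * y ^ (-β)

lemma integrable_majorant {β p C : ℝ} (hβ : 1 < β) (hpβ : β * p < 1) :
    Integrable fun t : ℝ => majorant β p C |t| := by
  have h0 : IntegrableOn (majorant β p C) (Ioi 0) := by
    rw [← Ioc_union_Ioi_eq_Ioi (zero_le_one (α := ℝ))]
    refine IntegrableOn.union ?_ ?_
    · have : IntegrableOn (fun y : ℝ => C ^ p * y ^ (-(β * p))) (Ioc 0 1) :=
        (((intervalIntegrable_iff_integrableOn_Ioc_of_le zero_le_one).1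
          (intervalIntegral.intervalIntegrable_rpow' (by linarith)))).const_mul _
      exact this.congr_fun (fun y hy => by simp [majorant, hy.2]) measurableSet_Ioc
    · have : IntegrableOn (fun y : ℝ => C * y ^ (-β)) (Ioi 1) :=
        (integrableOn_Ioi_rpow_of_lt (by linarith) zero_lt_one).const_mul _
      exact this.congr_fun (fun y hy => by simp [majorant, not_le.2 (mem_Ioi.1 hy)])
        measurableSet_Ioi
  exact (integrable_fun_norm_addHaar (volume : Measure ℝ) (f := majorant β p C)).2
    (by simpa using h0)

lemma le_majorant {β p C : ℝ} (hp : 0 < p) (hp1 : p ≤ 1) (hC : 0 < C) {z : ℂ} {t : ℝ}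
    (hz : ‖z‖ ≤ C * |t| ^ (-β)) : ‖‖1 - z‖ ^ p - 1‖ ≤ majorant β p C |t| := by
  have h1 : |‖1 - z‖ - 1| ≤ ‖z‖ := by
    have := abs_norm_sub_norm_le (1 - z) 1
    simpa using this
  obtain ⟨h2, h3⟩ := abs_rpow_sub_one_le (norm_nonneg (1 - z)) hp hp1
  rw [Real.norm_eq_abs, majorant]
  split_ifs with h
  · refine h3.trans ((Real.rpow_le_rpow (abs_nonneg _) (h1.trans hz) hp.le).trans_eq ?_)
    rw [Real.mul_rpow hC.le (by positivity), ← Real.rpow_mul (abs_nonneg _), neg_mul]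
  · exact h2.trans (h1.trans hz)

/-! ### Negativity of the limiting integral -/

/-- The `N`-th partial sum `∑_{k=1}^N u^k / k` of the series of `-log (1 - u)`. -/
noncomputable def logSum (N : ℕ) (u : ℝ) : ℝ := ∑ n ∈ Finset.range N, u ^ (n + 1) / ((n : ℝ) + 1)

lemma logSum_nonneg (N : ℕ) {u : ℝ} (hu : 0 ≤ u) : 0 ≤ logSum N u :=
  Finset.sum_nonneg fun n _ => by positivity

/-- A second-order bound in `p`: it combines `log (1 - u) ≤ -logSum N u`,
`exp (-y) ≤ 1 - y + y² / 2` for `y ≥ 0`, and `logSum N u ≤ N u`. -/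
lemma one_sub_rpow_le (N : ℕ) {u p : ℝ} (hu : 0 ≤ u) (hu1 : u < 1) (hp : 0 < p) :
    (1 - u) ^ p ≤ 1 - p * logSum N u + p ^ 2 * (N ^ 2 / 2) * u := by
  have hS0 := logSum_nonneg N hu
  have hlog : Real.log (1 - u) ≤ -logSum N u := by
    have h := Real.hasSum_pow_div_log_of_abs_lt_one (abs_lt.2 ⟨by linarith, hu1⟩)
    have := sum_le_hasSum (Finset.range N) (fun n _ => by positivity) h
    rw [logSum]; linarith
  have hSN : logSum N u ≤ N * u := by
    have : logSum N u ≤ ∑ n ∈ Finset.range N, u := by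
      refine Finset.sum_le_sum fun n _ => ?_
      have h1 : u ^ (n + 1) ≤ u := pow_le_of_le_one hu hu1.le (by simp)
      rw [div_le_iff₀ (by positivity)]
      nlinarith [(Nat.cast_nonneg n : (0 : ℝ) ≤ n)]
    simpa using this
  have hexp : ∀ y : ℝ, 0 ≤ y → Real.exp (-y) ≤ 1 - y + y ^ 2 / 2 := by
    intro y hy
    have h1 := Real.quadratic_le_exp_of_nonneg hy
    have h2 : 0 < 1 - y + y ^ 2 / 2 := by nlinarith [sq_nonneg (y - 1)]
    rw [Real.exp_neg, inv_le_iff_one_le_mul₀ (Real.exp_pos y)]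
    -- `(1 - y + y²/2) (1 + y + y²/2) = 1 + y⁴/4`.
    have h3 := mul_le_mul_of_nonneg_left h1 h2.le
    nlinarith [sq_nonneg (y ^ 2)]
  rw [Real.rpow_def_of_pos (by linarith)]
  calc Real.exp (Real.log (1 - u) * p) ≤ Real.exp (-(p * logSum N u)) := by
        apply Real.exp_le_exp.2; nlinarith
    _ ≤ 1 - p * logSum N u + (p * logSum N u) ^ 2 / 2 := hexp _ (by positivity)
    _ ≤ _ := by
      have h1 : logSum N u ^ 2 ≤ N ^ 2 * u := by
        calc logSum N u ^ 2 ≤ (N * u) ^ 2 := by gcongr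
          _ = N ^ 2 * (u * u) := by ring
          _ ≤ N ^ 2 * u := by
            gcongr; nlinarith
      nlinarith [sq_nonneg p]

/-- At `β = 2` the series telescopes with total `1`; for `β < 2` the gain in the first term already
outweighs the tail left out by a long enough partial sum. -/
lemma exists_sum_gt_one {β : ℝ} (hβ : 1 < β) (hβ2 : β < 2) :
    ∃ N : ℕ, 1 < ∑ n ∈ Finset.range N, 2 / (β ^ 2 * ((n : ℝ) + 1) ^ 2 - 1) := by
  have hgap : 0 < 2 / (β ^ 2 - 1) - 2 / 3 := by
    rw [sub_pos]
    apply div_lt_div_of_pos_left <;> nlinarith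
  obtain ⟨N, hN⟩ := exists_nat_one_div_lt hgap
  refine ⟨N + 1, ?_⟩
  have key : ∀ N : ℕ, 2 / (β ^ 2 - 1) - 2 / 3 + 1 - 1 / (2 * (N : ℝ) + 3) ≤
      ∑ n ∈ Finset.range (N + 1), 2 / (β ^ 2 * ((n : ℝ) + 1) ^ 2 - 1) := by
    intro N
    induction N with
    | zero => norm_num; linarith
    | succ k ih =>
      rw [Finset.sum_range_succ]
      have hk : (0 : ℝ) ≤ k := Nat.cast_nonneg k
      have h1 : 1 / (2 * (k : ℝ) + 3) - 1 / (2 * (k : ℝ) + 5) =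
          2 / (4 * ((k : ℝ) + 2) ^ 2 - 1) := by
        have : 4 * ((k : ℝ) + 2) ^ 2 - 1 = (2 * k + 3) * (2 * k + 5) := by ring
        rw [this]; field_simp; ring
      have h2 : 2 / (4 * ((k : ℝ) + 2) ^ 2 - 1) ≤ 2 / (β ^ 2 * ((k : ℝ) + 2) ^ 2 - 1) := by
        apply div_le_div_of_nonneg_left (by norm_num)
        · have h4 : 1 < β * ((k : ℝ) + 2) := by nlinarith
          rw [← mul_pow]; nlinarith
        · have : β ^ 2 ≤ 4 := by nlinarith
          gcongr
      push_cast
      rw [show (k : ℝ) + 1 + 1 = k + 2 by ring, show 2 * ((k : ℝ) + 1) + 3 = 2 * k + 5 by ring]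
      linarith
  have h1 : 1 / (2 * (N : ℝ) + 3) ≤ 1 / ((N : ℝ) + 1) := by
    apply one_div_le_one_div_of_le <;> linarith [(Nat.cast_nonneg N : (0 : ℝ) ≤ N)]
  linarith [key N]

lemma integral_rpow_neg_Ioi {c : ℝ} (hc : 1 < c) :
    ∫ t in Ioi (1 : ℝ), t ^ (-c) = 1 / (c - 1) := by
  rw [integral_Ioi_rpow_of_lt (by linarith) zero_lt_one, Real.one_rpow, neg_div, ← one_div_neg_eq_neg_one_div]
  ring_nf

lemma integrableOn_rpow_Ioc {c : ℝ} (hc : -1 < c) : IntegrableOn (fun t : ℝ => t ^ c) (Ioc 0 1) :=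
  (intervalIntegrable_iff_integrableOn_Ioc_of_le zero_le_one).1
    (intervalIntegral.intervalIntegrable_rpow' hc)

lemma integral_rpow_Ioc {c : ℝ} (hc : -1 < c) :
    ∫ t in Ioc (0 : ℝ) 1, t ^ c = 1 / (c + 1) := by
  rw [← intervalIntegral.integral_of_le zero_le_one, integral_rpow (Or.inl hc), Real.one_rpow,
    Real.zero_rpow (by linarith), sub_zero]

lemma integral_Ioi_le (N : ℕ) {β p : ℝ} (hβ : 1 < β) (hp : 0 < p)
    (hf : IntegrableOn (fun t : ℝ => |1 - t ^ (-β)| ^ p - 1) (Ioi 1)) :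
    ∫ t in Ioi (1 : ℝ), (|1 - t ^ (-β)| ^ p - 1) ≤
      -p * (∑ n ∈ Finset.range N, 1 / (((n : ℝ) + 1) * (β * (n + 1) - 1))) +
        p ^ 2 * (N ^ 2 / 2) / (β - 1) := by
  have hb : ∀ n : ℕ, 1 < β * ((n : ℝ) + 1) := fun n => by
    nlinarith [(Nat.cast_nonneg n : (0 : ℝ) ≤ n)]
  have hi : ∀ c : ℝ, 1 < c → IntegrableOn (fun t : ℝ => t ^ (-c)) (Ioi 1) := fun c hc =>
    integrableOn_Ioi_rpow_of_lt (by linarith) zero_lt_one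
  have hiS : IntegrableOn (fun t : ℝ =>
      ∑ n ∈ Finset.range N, t ^ (-(β * ((n : ℝ) + 1))) / ((n : ℝ) + 1)) (Ioi 1) :=
    integrable_finsetSum _ fun n _ => (hi _ (hb n)).div_const _
  have hval : ∫ t in Ioi (1 : ℝ), (-p * (∑ n ∈ Finset.range N,
      t ^ (-(β * ((n : ℝ) + 1))) / ((n : ℝ) + 1)) + p ^ 2 * (N ^ 2 / 2) * t ^ (-β)) =
      -p * (∑ n ∈ Finset.range N, 1 / (((n : ℝ) + 1) * (β * (n + 1) - 1))) +
        p ^ 2 * (N ^ 2 / 2) / (β - 1) := by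
    rw [integral_add (hiS.const_mul _) ((hi β hβ).const_mul _), integral_const_mul,
      integral_const_mul, integral_rpow_neg_Ioi hβ,
      integral_finsetSum _ fun n _ => (hi _ (hb n)).div_const _]
    congr 1
    · congr 1
      refine Finset.sum_congr rfl fun n _ => ?_
      rw [integral_div, integral_rpow_neg_Ioi (hb n), div_div, mul_comm (β * _ - 1)]
    · ring
  rw [← hval]
  refine setIntegral_mono_on hf ((hiS.const_mul _).add ((hi β hβ).const_mul _)) measurableSet_Ioi
    fun t ht => ?_
  have ht0 : (0 : ℝ) < t := zero_lt_one.trans ht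
  have hu1 : t ^ (-β) < 1 := Real.rpow_lt_one_of_one_lt_of_neg ht (by linarith)
  have hu0 : 0 ≤ t ^ (-β) := by positivity
  have h := one_sub_rpow_le N hu0 hu1 hp
  have hS : logSum N (t ^ (-β)) =
      ∑ n ∈ Finset.range N, t ^ (-(β * ((n : ℝ) + 1))) / ((n : ℝ) + 1) := by
    refine Finset.sum_congr rfl fun n _ => ?_
    rw [← Real.rpow_natCast, ← Real.rpow_mul ht0.le]
    push_cast
    rw [neg_mul]
  rw [abs_of_pos (by linarith), ← hS]
  linarith

/-- On `(0, 1]` the factorization `|1 - t^{-β}| = t^{-β} (1 - t^β)` reduces to the expansion at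
`u = t^β`. -/
lemma integral_Ioc_le (N : ℕ) {β p : ℝ} (hβ : 1 < β) (hp : 0 < p) (hpβ : β * p < 1)
    (hf : IntegrableOn (fun t : ℝ => |1 - t ^ (-β)| ^ p - 1) (Ioc 0 1)) :
    ∫ t in Ioc (0 : ℝ) 1, (|1 - t ^ (-β)| ^ p - 1) ≤
      -p * (∑ n ∈ Finset.range N, 1 / (((n : ℝ) + 1) * (β * (n + 1) + 1))) +
        ((1 + p ^ 2 * (N ^ 2 / 2)) / (1 - β * p) - 1) := by
  have hb : ∀ n : ℕ, -1 < β * ((n : ℝ) + 1) := fun n => by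
    nlinarith [(Nat.cast_nonneg n : (0 : ℝ) ≤ n)]
  have hiS : IntegrableOn (fun t : ℝ =>
      ∑ n ∈ Finset.range N, t ^ (β * ((n : ℝ) + 1)) / ((n : ℝ) + 1)) (Ioc 0 1) :=
    integrable_finsetSum _ fun n _ => (integrableOn_rpow_Ioc (hb n)).div_const _
  have hi1 : IntegrableOn (fun t : ℝ => (1 + p ^ 2 * (N ^ 2 / 2)) * t ^ (-(β * p))) (Ioc 0 1) :=
    (integrableOn_rpow_Ioc (by linarith)).const_mul _
  have hi2 : IntegrableOn (fun _ : ℝ => (1 : ℝ)) (Ioc 0 1) := by simp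
  have hval : ∫ t in Ioc (0 : ℝ) 1, (-p * (∑ n ∈ Finset.range N,
      t ^ (β * ((n : ℝ) + 1)) / ((n : ℝ) + 1)) +
        ((1 + p ^ 2 * (N ^ 2 / 2)) * t ^ (-(β * p)) - 1)) =
      -p * (∑ n ∈ Finset.range N, 1 / (((n : ℝ) + 1) * (β * (n + 1) + 1))) +
        ((1 + p ^ 2 * (N ^ 2 / 2)) / (1 - β * p) - 1) := by
    rw [integral_add (hiS.const_mul _) (by exact hi1.sub hi2), integral_sub hi1 hi2, integral_const_mul,
      integral_const_mul, integral_rpow_Ioc (by linarith),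
      integral_finsetSum _ fun n _ => (integrableOn_rpow_Ioc (hb n)).div_const _]
    congr 1
    · congr 1
      refine Finset.sum_congr rfl fun n _ => ?_
      rw [integral_div, integral_rpow_Ioc (hb n), div_div, mul_comm (β * _ + 1)]
    · simp; ring
  rw [← hval]
  have hae : ∀ᵐ t ∂(volume.restrict (Ioc (0 : ℝ) 1)), |1 - t ^ (-β)| ^ p - 1 ≤
      -p * (∑ n ∈ Finset.range N, t ^ (β * ((n : ℝ) + 1)) / ((n : ℝ) + 1)) +
        ((1 + p ^ 2 * (N ^ 2 / 2)) * t ^ (-(β * p)) - 1) := by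
    have h1 : ∀ᵐ t ∂(volume.restrict (Ioc (0 : ℝ) 1)), t ≠ 1 :=
      ae_restrict_of_ae (Measure.ae_ne volume 1)
    filter_upwards [h1, ae_restrict_mem measurableSet_Ioc] with t ht1 ht
    have ht0 : (0 : ℝ) < t := ht.1
    have htl : t < 1 := lt_of_le_of_ne ht.2 ht1
    have hu1 : t ^ β < 1 := Real.rpow_lt_one ht0.le htl (by linarith)
    have hu0 : 0 ≤ t ^ β := by positivity
    have h := one_sub_rpow_le N hu0 hu1 hp
    have hS0 := logSum_nonneg N hu0
    have hS : logSum N (t ^ β) =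
        ∑ n ∈ Finset.range N, t ^ (β * ((n : ℝ) + 1)) / ((n : ℝ) + 1) := by
      refine Finset.sum_congr rfl fun n _ => ?_
      rw [← Real.rpow_natCast, ← Real.rpow_mul ht0.le]
      push_cast
      rfl
    have hfac : |1 - t ^ (-β)| = t ^ (-β) * (1 - t ^ β) := by
      have h2 : t ^ (-β) * t ^ β = 1 := by rw [← Real.rpow_add ht0]; simp
      have h3 : 0 < t ^ (-β) := by positivity
      rw [abs_of_nonpos (by nlinarith)]
      linear_combination h2
    -- Since `t^{-βp} ≥ 1`, that factor may be dropped from the negative term `-p logSum`.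
    have hw : 1 ≤ t ^ (-(β * p)) :=
      Real.one_le_rpow_of_pos_of_le_one_of_nonpos ht0 ht.2 (by nlinarith)
    rw [hfac, Real.mul_rpow (by positivity) (by linarith), ← Real.rpow_mul ht0.le, neg_mul, ← hS]
    have h4 : (1 - t ^ β) ^ p ≤ 1 - p * logSum N (t ^ β) + p ^ 2 * (N ^ 2 / 2) := by
      have : 0 ≤ p ^ 2 * ((N : ℝ) ^ 2 / 2) := by positivity
      nlinarith
    have h5 := mul_le_mul_of_nonneg_left h4 (zero_le_one.trans hw)
    have h6 : 0 ≤ p * logSum N (t ^ β) := by positivity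
    nlinarith
  exact integral_mono_ae hf ((hiS.const_mul _).add (hi1.sub hi2)) hae

/-- The integral is at most `2p` times the function of `p` in `hcont`, whose value at `p = 0` is
`β (1 - A) < 0` for a partial sum `A > 1`. -/
lemma exists_exponent {β : ℝ} (hβ : 1 < β) (hβ2 : β < 2)
    (hint : ∀ p, 0 < p → p < 1 → β * p < 1 →
      Integrable fun t : ℝ => |1 - |t| ^ (-β)| ^ p - 1) :
    ∃ p ∈ Ioo (0 : ℝ) 1, β * p < 1 ∧ ∫ t : ℝ, (|1 - |t| ^ (-β)| ^ p - 1) < 0 := by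
  obtain ⟨N, hN⟩ := exists_sum_gt_one hβ hβ2
  set A := ∑ n ∈ Finset.range N, 2 / (β ^ 2 * ((n : ℝ) + 1) ^ 2 - 1) with hA
  set M : ℝ := (N : ℝ) ^ 2 / 2 with hM
  have hcont : ContinuousAt (fun p : ℝ => (β + p * M) / (1 - β * p) + p * M / (β - 1) - β * A) 0 := by
    have : (1 : ℝ) - β * 0 ≠ 0 := by simp
    fun_prop (disch := assumption)
  have hneg : (β + 0 * M) / (1 - β * 0) + 0 * M / (β - 1) - β * A < 0 := by
    simp; nlinarith
  have hev := (hcont.eventually_lt continuousAt_const hneg).filter_mono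
    (nhdsWithin_le_nhds (s := Ioi 0))
  -- `p < 1/2` and `β < 2` give `β p < 1`.
  obtain ⟨p, hpneg, hp0, hp2⟩ :=
    (hev.and (Ioo_mem_nhdsGT (show (0 : ℝ) < 1 / 2 by norm_num))).exists
  have hpβ : β * p < 1 := by nlinarith
  refine ⟨p, ⟨hp0, by linarith⟩, hpβ, ?_⟩
  have hf := hint p hp0 (by linarith) hpβ
  have hf0 : IntegrableOn (fun t : ℝ => |1 - t ^ (-β)| ^ p - 1) (Ioi 0) :=
    hf.integrableOn.congr_fun (fun t ht => by simp only [abs_of_pos (mem_Ioi.1 ht)])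
      measurableSet_Ioi
  have hfc := hf0.mono_set (fun t (ht : t ∈ Ioc (0 : ℝ) 1) => mem_Ioi.2 ht.1)
  have hfi := hf0.mono_set (Ioi_subset_Ioi (zero_le_one (α := ℝ)))
  rw [integral_comp_abs (f := fun t : ℝ => |1 - t ^ (-β)| ^ p - 1),
    ← Ioc_union_Ioi_eq_Ioi (zero_le_one (α := ℝ)),
    setIntegral_union (Ioc_disjoint_Ioi le_rfl) measurableSet_Ioi hfc hfi]
  have h1 := integral_Ioc_le N hβ hp0 hpβ hfc
  have h2 := integral_Ioi_le N hβ hp0 hfi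
  rw [← hM] at h1 h2
  have hsum : ∑ n ∈ Finset.range N, 1 / (((n : ℝ) + 1) * (β * (n + 1) + 1)) +
      ∑ n ∈ Finset.range N, 1 / (((n : ℝ) + 1) * (β * (n + 1) - 1)) = β * A := by
    rw [← Finset.sum_add_distrib, hA, Finset.mul_sum]
    refine Finset.sum_congr rfl fun n _ => ?_
    have h3 : (0 : ℝ) < n + 1 := by positivity
    have h4 : 0 < β * ((n : ℝ) + 1) - 1 := by nlinarith [(Nat.cast_nonneg n : (0 : ℝ) ≤ n)]
    have h5 : 0 < β * ((n : ℝ) + 1) + 1 := by linarith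
    have h6 : β ^ 2 * ((n : ℝ) + 1) ^ 2 - 1 = (β * (n + 1) - 1) * (β * (n + 1) + 1) := by ring
    rw [h6, div_add_div _ _ (mul_pos h3 h5).ne' (mul_pos h3 h4).ne', mul_div_assoc',
      div_eq_div_iff (mul_pos (mul_pos h3 h5) (mul_pos h3 h4)).ne' (mul_pos h4 h5).ne']
    ring
  have h7 : (1 + p ^ 2 * M) / (1 - β * p) - 1 = p * ((β + p * M) / (1 - β * p)) := by
    have : 1 - β * p ≠ 0 := by linarith
    rw [← mul_div_assoc, div_sub_one this]
    ring
  have h8 : p ^ 2 * M / (β - 1) = p * (p * M / (β - 1)) := by ring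
  have h9 := mul_neg_of_pos_of_neg hp0 hpneg
  rw [h7] at h1
  rw [h8] at h2
  have h10 := congrArg (fun x => p * x) hsum
  simp only [mul_add] at h10
  nlinarith

/-! ### The theorem -/

/-- For α ∈ (0,1) and a finitizator φ there exist p ∈ (0,1), B < 0,
θ₀ > 0 and ε₀ > 0 such that for all θ ∈ [0,θ₀] and ε ∈ (0,ε₀) the integral
J(ε,θ) = ∫ (|1 − e^{iθ}F^{[ε]}(t)|^p − 1) dt converges absolutely and J(ε,θ) < B. -/
theorem statement11 (α : ℝ) (hα : α ∈ Set.Ioo (0 : ℝ) 1)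
    (φ : ℝ → ℝ) (hφs : ContDiff ℝ (⊤ : ℕ∞) φ) (hφc : HasCompactSupport φ)
    (hφ0 : ∀ x, 0 ≤ φ x) (hφsupp : tsupport φ ⊆ Set.Ioo (-(1 / 2) : ℝ) (1 / 2))
    (hφ1 : ∫ x : ℝ, φ x = 1) :
    ∃ p ∈ Set.Ioo (0 : ℝ) 1, ∃ B < (0 : ℝ), ∃ θ₀ > (0 : ℝ), ∃ ε₀ > (0 : ℝ),
      ∀ θ ∈ Set.Icc (0 : ℝ) θ₀, ∀ ε ∈ Set.Ioo (0 : ℝ) ε₀,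
        Integrable
          (fun t : ℝ => ‖1 - Complex.exp (θ * Complex.I) * Feps α φ ε t‖ ^ p - 1) ∧
        ∫ t : ℝ, (‖1 - Complex.exp (θ * Complex.I) * Feps α φ ε t‖ ^ p - 1) < B := by
  obtain ⟨G, hGc, hGF, hGb⟩ := exists_profile hα hφs hφc hφ0 hφsupp hφ1
  have hβ : 1 < α + 1 := by linarith [hα.1]
  have hβ2 : α + 1 < 2 := by linarith [hα.2]
  set β := α + 1
  obtain ⟨C, hC, hCb⟩ := profile_bound (by linarith) hGc hGb
  have hne : ∀ᵐ t : ℝ, t ≠ 0 := Measure.ae_ne volume 0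
  have hreal : ∀ (p t : ℝ), |1 - |t| ^ (-β)| ^ p - 1 =
      ‖1 - Complex.exp ((0 : ℝ) * Complex.I) * ((|t| ^ (-β) : ℝ) : ℂ)‖ ^ p - 1 := by
    intro p t
    rw [Complex.ofReal_zero, zero_mul, Complex.exp_zero, one_mul, ← Complex.ofReal_one,
      ← Complex.ofReal_sub, Complex.norm_real, Real.norm_eq_abs]
  obtain ⟨p, hp, hpβ, hJ⟩ := exists_exponent hβ hβ2 (by
    intro p hp hp1 hpβ
    refine (integrable_majorant (C := 1) hβ hpβ).mono'
      (Measurable.aestronglyMeasurable (by fun_prop)) (ae_of_all _ fun t => ?_)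
    rw [hreal]
    refine le_majorant hp hp1.le one_pos ?_
    rw [norm_mul, Complex.norm_exp_ofReal_mul_I, Complex.norm_real, Real.norm_eq_abs,
      abs_of_nonneg (by positivity)])
  have hmeas : ∀ (θ ε : ℝ), 0 < ε → AEStronglyMeasurable
      (fun t : ℝ => ‖1 - Complex.exp (θ * Complex.I) * Feps α φ ε t‖ ^ p - 1) volume := by
    intro θ ε hε
    simp only [hGF ε hε]
    have := hGc.measurable
    exact Measurable.aestronglyMeasurable (by fun_prop)
  have hbound : ∀ (θ ε : ℝ), 0 < ε → ∀ᵐ t : ℝ,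
      ‖‖1 - Complex.exp (θ * Complex.I) * Feps α φ ε t‖ ^ p - 1‖ ≤ majorant β p C |t| := by
    intro θ ε hε
    filter_upwards [hne] with t ht
    refine le_majorant hp.1 hp.2.le hC ?_
    rw [norm_mul, Complex.norm_exp_ofReal_mul_I, one_mul, hGF ε hε, Complex.norm_real,
      Real.norm_eq_abs]
    exact hCb ε hε t ht
  have hpos : ∀ᶠ q : ℝ × ℝ in 𝓝[≥] 0 ×ˢ 𝓝[>] 0, 0 < q.2 :=
    tendsto_snd.eventually self_mem_nhdsWithin
  have hlim : Tendsto (fun q : ℝ × ℝ => ∫ t : ℝ,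
      (‖1 - Complex.exp (q.1 * Complex.I) * Feps α φ q.2 t‖ ^ p - 1)) (𝓝[≥] 0 ×ˢ 𝓝[>] 0)
      (𝓝 (∫ t : ℝ, (|1 - |t| ^ (-β)| ^ p - 1))) := by
    refine tendsto_integral_filter_of_dominated_convergence (fun t => majorant β p C |t|)
      (hpos.mono fun q hq => hmeas _ _ hq) (hpos.mono fun q hq => hbound _ _ hq)
      (integrable_majorant hβ hpβ) ?_
    filter_upwards [hne] with t ht
    rw [hreal]
    have h1 : Tendsto (fun q : ℝ × ℝ => Feps α φ q.2 t) (𝓝[≥] 0 ×ˢ 𝓝[>] 0)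
        (𝓝 ((|t| ^ (-β) : ℝ) : ℂ)) := by
      have h := (Complex.continuous_ofReal.tendsto _).comp
        ((tendsto_profile hGb ht).comp (tendsto_snd (f := 𝓝[≥] (0 : ℝ)) (g := 𝓝[>] (0 : ℝ))))
      exact h.congr' (hpos.mono fun q hq => (hGF q.2 hq t).symm)
    have h2 : Tendsto (fun q : ℝ × ℝ => Complex.exp (q.1 * Complex.I)) (𝓝[≥] 0 ×ˢ 𝓝[>] 0)
        (𝓝 (Complex.exp ((0 : ℝ) * Complex.I))) := by
      have h : Continuous fun θ : ℝ => Complex.exp (θ * Complex.I) := by fun_prop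
      exact ((h.tendsto 0).mono_left nhdsWithin_le_nhds).comp tendsto_fst
    exact (((h2.mul h1).const_sub 1).norm.rpow_const (Or.inr hp.1.le)).sub_const 1
  set J := ∫ t : ℝ, (|1 - |t| ^ (-β)| ^ p - 1) with hJdef
  have hev := hlim.eventually_lt_const (show J < J / 2 by linarith)
  obtain ⟨⟨θ₀, ε₀⟩, ⟨hθ₀, hε₀⟩, hlt⟩ :=
    (((nhdsGE_basis_Icc (a := (0 : ℝ))).prod (nhdsGT_basis (0 : ℝ))).eventually_iff).1 hev
  refine ⟨p, hp, J / 2, by linarith, θ₀, hθ₀, ε₀, hε₀, fun θ hθ ε hε => ⟨?_, ?_⟩⟩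
  · exact (integrable_majorant hβ hpβ).mono' (hmeas θ ε hε.1) (hbound θ ε hε.1)
  · exact hlt (x := (θ, ε)) ⟨hθ, hε⟩
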